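/- arXiv:1008.0621 — 2 statements merged into one kernel-verified Lean document; each statement's English description precedes it below -/
import Mathlib

section
/- Let R be a commutative ring and M an invertible R-module, i.e., a finitely generated projective R-module whose localization at every prime ideal of R is free of rank 1. Let f, g ∈ M be two elements that generate M, i.e., the R-submodule of M spanned by {f, g} is all of M. Then the sequence 0 → Hom_R(M, R) → R × R → M → 0 is a short exact sequence of R-modules, where the first map sends φ to (φ f, φ g) and the second map sends (a, b) to a • g − b • f. In particular, the cokernel of the map Hom_R(M, R) → R × R, φ ↦ (φ f, φ g), is isomorphic as an R-module to M. -/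
/-- An *invertible module* over a commutative ring `R`: a finitely generated projective
`R`-module whose localization at every prime ideal of `R` is free of rank 1. -/
def IsInvertibleModule (R : Type*) [CommRing R] (M : Type*) [AddCommGroup M]
    [Module R M] : Prop :=
  Module.Finite R M ∧ Module.Projective R M ∧
    ∀ (p : Ideal R) [p.IsPrime],
      Module.Free (Localization.AtPrime p) (LocalizedModule p.primeCompl M) ∧
      Module.finrank (Localization.AtPrime p) (LocalizedModule p.primeCompl M) = 1

/-- The `R`-linear map `Hom_R(M, R) → R × R`, `φ ↦ (φ f, φ g)`. -/
def evalPair (R : Type*) [CommRing R] (M : Type*) [AddCommGroup M] [Module R M]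
    (f g : M) : (M →ₗ[R] R) →ₗ[R] R × R :=
  LinearMap.prod (LinearMap.applyₗ f) (LinearMap.applyₗ g)

/-- The `R`-linear map `R × R → M`, `(a, b) ↦ a • g - b • f`. -/
def diffPair (R : Type*) [CommRing R] (M : Type*) [AddCommGroup M] [Module R M]
    (f g : M) : R × R →ₗ[R] M :=
  (LinearMap.toSpanSingleton R M g).coprod (-(LinearMap.toSpanSingleton R M f))

/-!
Since `M` is finitely presented, the dual of `M` and its evaluation map `Hom_R(M, R) ⊗ M → R`
commute with localization; as `M` is locally isomorphic to `R`, evaluation is bijective. Two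
consequences give exactness in the middle. The swap of `M ⊗ M` is locally, hence globally, the
identity, so `φ f • g = φ g • f` for every functional `φ`. Evaluation is onto, so `α f + β g = 1`
for some functionals `α`, `β`; if `a • g = b • f`, then `φ = a • α + b • β` satisfies
`φ f = a * α f + β (b • f) = a * α f + β (a • g) = a`, and likewise `φ g = b`.
-/

open TensorProduct

section DualLocalization

variable {R : Type*} [CommSemiring R] {M : Type*} [AddCommMonoid M] [Module R M]

/-- Localization of functionals, `Hom_R(M, R) → Hom_{S⁻¹R}(S⁻¹M, S⁻¹R)`; for finitely presented
`M` it exhibits the dual of `S⁻¹M` as the localization of the dual of `M`. The target consists of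
`S⁻¹R`-linear functionals, to match the domain of `contractLeft` over `S⁻¹R`. -/
noncomputable abbrev dualLocalization (S : Submonoid R) (M : Type*) [AddCommMonoid M]
    [Module R M] :
    Module.Dual R M →ₗ[R] Module.Dual (Localization S) (LocalizedModule S M) :=
  IsLocalizedModule.mapExtendScalars S (LocalizedModule.mkLinearMap S M)
    (Algebra.linearMap R (Localization S)) (Localization S)

theorem dualLocalization_apply_mkLinearMap (S : Submonoid R) (φ : Module.Dual R M) (x : M) :
    dualLocalization S M φ (LocalizedModule.mkLinearMap S M x) =
      algebraMap R (Localization S) (φ x) :=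
  IsLocalizedModule.map_apply S _ (Algebra.linearMap R (Localization S)) φ x

end DualLocalization

section LocalCriterion

variable {R : Type*} [CommRing R] {M : Type*} [AddCommGroup M] [Module R M]

theorem map_contractLeft_eq_contractLeft_comp (S : Submonoid R) [Module.FinitePresentation R M] :
    IsLocalizedModule.map S
        (TensorProduct.map (dualLocalization S M) (LocalizedModule.mkLinearMap S M))
        (Algebra.linearMap R (Localization S)) (contractLeft R M) =
      (contractLeft (Localization S) (LocalizedModule S M)).restrictScalars R ∘ₗ
        (equivOfCompatibleSMul (Localization S) R R
          (Module.Dual (Localization S) (LocalizedModule S M))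
          (LocalizedModule S M)).toLinearMap := by
  apply IsLocalizedModule.linearMap_ext S
    (TensorProduct.map (dualLocalization S M) (LocalizedModule.mkLinearMap S M))
    (Algebra.linearMap R (Localization S))
  refine TensorProduct.ext' fun φ x ↦ ?_
  rw [LinearMap.comp_apply, IsLocalizedModule.map_apply]
  exact (dualLocalization_apply_mkLinearMap S φ x).symm

theorem invertible_of_localized_maximal [Module.FinitePresentation R M]
    (h : ∀ (P : Ideal R) [P.IsMaximal],
      Module.Invertible (Localization.AtPrime P) (LocalizedModule P.primeCompl M)) :
    Module.Invertible R M where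
  bijective := by
    refine bijective_of_isLocalized_maximal _
      (fun P _ ↦ TensorProduct.map (dualLocalization P.primeCompl M)
        (LocalizedModule.mkLinearMap P.primeCompl M))
      _ (fun P _ ↦ Algebra.linearMap R (Localization P.primeCompl)) (contractLeft R M) fun P _ ↦ ?_
    rw [map_contractLeft_eq_contractLeft_comp]
    exact (h P).bijective.comp (LinearEquiv.bijective _)

theorem IsInvertibleModule.invertible (hM : IsInvertibleModule R M) : Module.Invertible R M := by
  obtain ⟨_, _, hloc⟩ := hM
  have := Module.finitePresentation_of_projective R M
  refine invertible_of_localized_maximal fun P _ ↦ ?_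
  obtain ⟨_, hrank⟩ := hloc P
  exact .congr (Module.nonempty_linearEquiv_of_finrank_eq_one hrank).some

end LocalCriterion

section Functionals

variable {R : Type*} [CommSemiring R] {M : Type*} [AddCommMonoid M] [Module R M] {f g : M}

theorem dual_apply_smul_comm [Module.Invertible R M] (φ : Module.Dual R M) (x y : M) :
    φ x • y = φ y • x := by
  simpa using congrArg (TensorProduct.lid R M ∘ φ.rTensor M)
    (Module.Invertible.tmul_comm (R := R) (m₁ := x) (m₂ := y))

theorem exists_contractLeft_eq_add_of_span_pair_eq_top
    (hfg : Submodule.span R ({f, g} : Set M) = ⊤) (t : Module.Dual R M ⊗[R] M) :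
    ∃ α β : Module.Dual R M, contractLeft R M t = α f + β g := by
  induction t with
  | zero => exact ⟨0, 0, by simp⟩
  | tmul φ x =>
    obtain ⟨a, b, rfl⟩ := Submodule.mem_span_pair.mp (hfg ▸ Submodule.mem_top : x ∈ _)
    exact ⟨a • φ, b • φ, by simp⟩
  | add t u ht hu =>
    obtain ⟨α, β, ht⟩ := ht
    obtain ⟨α', β', hu⟩ := hu
    exact ⟨α + α', β + β', by rw [map_add, ht, hu]; exact add_add_add_comm ..⟩

theorem exists_dual_apply_add_dual_apply_eq_one [Module.Invertible R M]
    (hfg : Submodule.span R ({f, g} : Set M) = ⊤) :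
    ∃ α β : Module.Dual R M, α f + β g = 1 := by
  obtain ⟨t, ht⟩ := (Module.Invertible.bijective (R := R) (M := M)).surjective 1
  obtain ⟨α, β, hαβ⟩ := exists_contractLeft_eq_add_of_span_pair_eq_top hfg t
  exact ⟨α, β, hαβ.symm.trans ht⟩

theorem exists_dual_apply_eq_of_smul_eq_smul {α β : Module.Dual R M} (hαβ : α f + β g = 1)
    {a b : R} (hab : a • g = b • f) : ∃ φ : Module.Dual R M, φ f = a ∧ φ g = b := by
  refine ⟨a • α + b • β, ?_, ?_⟩
  · calc
      (a • α + b • β) f = a * α f + β (b • f) := by simp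
      _ = a * (α f + β g) := by rw [← hab, map_smul, smul_eq_mul, mul_add]
      _ = a := by rw [hαβ, mul_one]
  · calc
      (a • α + b • β) g = α (a • g) + b * β g := by simp
      _ = b * (α f + β g) := by rw [hab, map_smul, smul_eq_mul, mul_add]
      _ = b := by rw [hαβ, mul_one]

end Functionals

section PairOfGenerators

variable {R : Type*} [CommRing R] {M : Type*} [AddCommGroup M] [Module R M] {f g : M}

@[simp]
theorem evalPair_apply (φ : M →ₗ[R] R) : evalPair R M f g φ = (φ f, φ g) := rfl

@[simp]
theorem diffPair_apply (c : R × R) : diffPair R M f g c = c.1 • g - c.2 • f := by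
  simp [diffPair, sub_eq_add_neg]

theorem evalPair_injective (hfg : Submodule.span R ({f, g} : Set M) = ⊤) :
    Function.Injective (evalPair R M f g) := by
  intro φ ψ h
  obtain ⟨hf, hg⟩ : φ f = ψ f ∧ φ g = ψ g := by simpa using h
  exact LinearMap.ext_on hfg (by simp [Set.EqOn, hf, hg])

theorem diffPair_surjective (hfg : Submodule.span R ({f, g} : Set M) = ⊤) :
    Function.Surjective (diffPair R M f g) := by
  intro x
  obtain ⟨a, b, rfl⟩ := Submodule.mem_span_pair.mp (hfg ▸ Submodule.mem_top : x ∈ _)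
  exact ⟨(b, -a), by simp [add_comm]⟩

theorem exact_evalPair_diffPair [Module.Invertible R M]
    (hfg : Submodule.span R ({f, g} : Set M) = ⊤) :
    Function.Exact (evalPair R M f g) (diffPair R M f g) := by
  rintro ⟨a, b⟩
  constructor
  · intro h
    have hab : a • g = b • f := by simpa [sub_eq_zero] using h
    obtain ⟨α, β, hαβ⟩ := exists_dual_apply_add_dual_apply_eq_one hfg
    obtain ⟨φ, hf, hg⟩ := exists_dual_apply_eq_of_smul_eq_smul hαβ hab
    exact ⟨φ, Prod.ext hf hg⟩
  · rintro ⟨φ, hφ⟩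
    rw [← hφ, evalPair_apply, diffPair_apply, dual_apply_smul_comm, sub_self]

end PairOfGenerators

/-- Let `R` be a commutative ring and `M` an invertible `R`-module.
If `f, g ∈ M` generate `M`, then `0 → Hom_R(M,R) → R × R → M → 0` is a short exact
sequence, where the first map is `φ ↦ (φ f, φ g)` and the second is `(a,b) ↦ a • g - b • f`.
In particular the cokernel of the first map is isomorphic to `M`. -/
theorem invertibleModule_shortExact (R : Type*) [CommRing R] (M : Type*) [AddCommGroup M]
    [Module R M] (hM : IsInvertibleModule R M) (f g : M)
    (hfg : Submodule.span R ({f, g} : Set M) = ⊤) :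
    Function.Injective (evalPair R M f g) ∧
    LinearMap.range (evalPair R M f g) = LinearMap.ker (diffPair R M f g) ∧
    Function.Surjective (diffPair R M f g) ∧
    Nonempty (((R × R) ⧸ LinearMap.range (evalPair R M f g)) ≃ₗ[R] M) := by
  have := hM.invertible
  have hexact := exact_evalPair_diffPair hfg
  have hsurj := diffPair_surjective hfg
  exact ⟨evalPair_injective hfg, hexact.linearMap_ker_eq.symm, hsurj,
    ⟨hexact.linearEquivOfSurjective hsurj⟩⟩
end

section
/- Let R be a commutative ring and M an invertible R-module, i.e., a finitely generated projective R-module whose localization at every prime ideal of R is free of rank 1. Let f, g ∈ M be two elements that generate M, i.e., the R-submodule of M spanned by {f, g} is all of M. Then the cokernel of the R-linear map Hom_R(M, R) → Hom_R(M, R) × R × R sending φ to (0, φ f, φ g) is isomorphic, as an R-module, to Hom_R(M, R) × M. -/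
/-- The `R`-linear map `Hom_R(M, R) → Hom_R(M, R) × R × R`, `φ ↦ (0, φ f, φ g)`. -/
def zeroEvalMap (R : Type*) [CommRing R] (M : Type*) [AddCommGroup M] [Module R M]
    (f g : M) : (M →ₗ[R] R) →ₗ[R] (M →ₗ[R] R) × R × R :=
  LinearMap.prod (0 : (M →ₗ[R] R) →ₗ[R] (M →ₗ[R] R))
    (LinearMap.prod (LinearMap.applyₗ f) (LinearMap.applyₗ g))

/-!
On an invertible module `φ x • y = φ y • x`, because this holds on rank one free modules and
equality is local. For a dual basis `m = ∑ i, α i m • v i`, exchanging `m` and `v i` gives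
`m = (∑ i, α i (v i)) • m`, so `∑ i, α i (v i) = 1` by faithfulness. Consequently, if
`a i • v j = a j • v i` for all `i`, `j`, the linear form `∑ i, a i • α i` takes the value `a j` at
each `v j`. For two generators `f`, `g` this is exactness of `Hom(M, R) → R × R → M`, where the
second map is `(a, b) ↦ a • g - b • f`; the zero component only adds a summand `Hom(M, R)` to the
cokernel.
-/

open Module

section RankOne

variable {R M : Type*} [CommSemiring R] [AddCommMonoid M] [Module R M]

theorem dual_apply_smul_comm_of_finrank_eq_one [Nontrivial R] [Free R M]
    (h : finrank R M = 1) (φ : Dual R M) (x y : M) : φ x • y = φ y • x := by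
  let b := basisUnique Unit h
  have hb (z : M) : b.repr z () • b () = z := by simpa using b.sum_repr z
  rw [← hb x, ← hb y]
  simp only [map_smul, smul_eq_mul, smul_smul]
  congr 1
  ring

theorem dual_apply_smul_comm_of_localized_maximal
    (h : ∀ (P : Ideal R) [P.IsMaximal]
      (ψ : Dual (Localization.AtPrime P) (LocalizedModule P.primeCompl M))
      (x y : LocalizedModule P.primeCompl M), ψ x • y = ψ y • x)
    (φ : Dual R M) (x y : M) : φ x • y = φ y • x := by
  refine eq_of_localization_maximal (R := R) (fun P _ ↦ LocalizedModule P.primeCompl M)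
    (fun P _ ↦ LocalizedModule.mkLinearMap P.primeCompl M) _ _ fun P _ ↦ ?_
  let ι := LocalizedModule.mkLinearMap P.primeCompl M
  let ψ := IsLocalizedModule.mapExtendScalars P.primeCompl ι
    (Algebra.linearMap R (Localization.AtPrime P)) (Localization.AtPrime P) φ
  have hψ (z : M) : ψ (ι z) = algebraMap R (Localization.AtPrime P) (φ z) :=
    IsLocalizedModule.map_apply P.primeCompl ι (Algebra.linearMap R (Localization.AtPrime P)) φ z
  simpa only [hψ, algebraMap_smul, map_smul] using h P ψ (ι x) (ι y)

theorem faithfulSMul_of_localized_maximal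
    (h : ∀ (P : Ideal R) [P.IsMaximal],
      FaithfulSMul (Localization.AtPrime P) (LocalizedModule P.primeCompl M)) :
    FaithfulSMul R M where
  eq_of_smul_eq_smul {r s} hrs := by
    refine eq_of_localization_maximal (R := R) (fun P _ ↦ Localization.AtPrime P)
      (fun P _ ↦ Algebra.linearMap R (Localization.AtPrime P)) _ _ fun P _ ↦ ?_
    refine (h P).eq_of_smul_eq_smul fun z ↦ ?_
    induction z using LocalizedModule.induction_on with
    | h m t => simp only [Algebra.linearMap_apply, algebraMap_smul, LocalizedModule.smul'_mk, hrs]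

end RankOne

theorem exists_dual_sum_apply_smul_eq {R M ι : Type*} [Semiring R] [AddCommMonoid M] [Module R M]
    [Projective R M] [Fintype ι] {v : ι → M} (hv : Submodule.span R (Set.range v) = ⊤) :
    ∃ α : ι → M →ₗ[R] R, ∀ m, ∑ i, α i m • v i = m := by
  have hsurj : Function.Surjective (Fintype.linearCombination R v) := by
    rw [← LinearMap.range_eq_top, Fintype.range_linearCombination, hv]
  obtain ⟨s, hs⟩ := projective_lifting_property (Fintype.linearCombination R v) .id hsurj
  exact ⟨fun i ↦ LinearMap.proj (φ := fun _ ↦ R) i ∘ₗ s, LinearMap.congr_fun hs⟩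

section DualBasis

variable {R M ι : Type*} [CommSemiring R] [AddCommMonoid M] [Module R M] [Fintype ι]
  {v : ι → M} {α : ι → Dual R M}

theorem sum_dual_apply_eq_one [FaithfulSMul R M]
    (hcomm : ∀ (φ : Dual R M) (x y : M), φ x • y = φ y • x)
    (hα : ∀ m, ∑ i, α i m • v i = m) : ∑ i, α i (v i) = 1 := by
  refine FaithfulSMul.eq_of_smul_eq_smul (α := M) fun m ↦ ?_
  calc (∑ i, α i (v i)) • m = ∑ i, α i (v i) • m := Finset.sum_smul
    _ = ∑ i, α i m • v i := Finset.sum_congr rfl fun i _ ↦ hcomm (α i) (v i) m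
    _ = (1 : R) • m := by rw [hα, one_smul]

theorem exists_dual_apply_eq_of_sum_eq_one (hα : ∑ i, α i (v i) = 1) {a : ι → R}
    (ha : ∀ i j, a i • v j = a j • v i) : ∃ φ : Dual R M, ∀ j, φ (v j) = a j := by
  refine ⟨∑ i, a i • α i, fun j ↦ ?_⟩
  calc (∑ i, a i • α i) (v j) = ∑ i, α i (a i • v j) := by simp
    _ = ∑ i, a j * α i (v i) := by simp only [ha _ j, map_smul, smul_eq_mul]
    _ = a j := by rw [← Finset.mul_sum, hα, mul_one]

end DualBasis

namespace IsInvertibleModule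

variable {R M : Type*} [CommRing R] [AddCommGroup M] [Module R M]

theorem dual_apply_smul_comm (hM : IsInvertibleModule R M) (φ : Dual R M) (x y : M) :
    φ x • y = φ y • x :=
  dual_apply_smul_comm_of_localized_maximal (fun P _ ↦
    have ⟨_, hrank⟩ := hM.2.2 P
    dual_apply_smul_comm_of_finrank_eq_one hrank) φ x y

theorem faithfulSMul (hM : IsInvertibleModule R M) : FaithfulSMul R M :=
  faithfulSMul_of_localized_maximal fun P _ ↦ by
    obtain ⟨_, hrank⟩ := hM.2.2 P
    have : Nontrivial (LocalizedModule P.primeCompl M) :=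
      nontrivial_of_finrank_pos (R := Localization.AtPrime P) (hrank ▸ one_pos)
    infer_instance

theorem exists_dual_apply_eq_iff (hM : IsInvertibleModule R M) {ι : Type*} [Finite ι]
    {v : ι → M} (hv : Submodule.span R (Set.range v) = ⊤) {a : ι → R} :
    (∃ φ : Dual R M, ∀ i, φ (v i) = a i) ↔ ∀ i j, a i • v j = a j • v i := by
  constructor
  · rintro ⟨φ, hφ⟩ i j
    simpa only [hφ] using hM.dual_apply_smul_comm φ (v i) (v j)
  · have := Fintype.ofFinite ι
    have := hM.2.1
    have := hM.faithfulSMul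
    obtain ⟨α, hα⟩ := exists_dual_sum_apply_smul_eq hv
    exact exists_dual_apply_eq_of_sum_eq_one (sum_dual_apply_eq_one hM.dual_apply_smul_comm hα)

end IsInvertibleModule

section SkewCombination

variable (R : Type*) {M : Type*} [CommRing R] [AddCommGroup M] [Module R M] (f g : M)

/-- The map `R × R → M` that cuts out, as its kernel, the value pairs `(φ f, φ g)` of linear forms
on a rank one module. The coefficients are crossed with the generators because the relation between
those values is `φ f • g = φ g • f`. -/
def skewCombination : R × R →ₗ[R] M :=
  (LinearMap.toSpanSingleton R M g).coprod (-LinearMap.toSpanSingleton R M f)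

@[simp]
theorem skewCombination_apply (x : R × R) : skewCombination R f g x = x.1 • g - x.2 • f := by
  simp [skewCombination, sub_eq_add_neg]

variable {R f g}

theorem skewCombination_surjective (hfg : Submodule.span R {f, g} = ⊤) :
    Function.Surjective (skewCombination R f g) := fun m ↦ by
  obtain ⟨c, d, rfl⟩ := Submodule.mem_span_pair.mp (hfg ▸ Submodule.mem_top (x := m))
  exact ⟨(d, -c), by rw [skewCombination_apply]; module⟩

theorem IsInvertibleModule.exact_prod_applyₗ_skewCombination (hM : IsInvertibleModule R M)
    (hfg : Submodule.span R {f, g} = ⊤) :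
    Function.Exact ((LinearMap.applyₗ f).prod (LinearMap.applyₗ g) : Dual R M →ₗ[R] R × R)
      (skewCombination R f g) := by
  rintro ⟨a, b⟩
  have hv : Submodule.span R (Set.range ![f, g]) = ⊤ := by
    rwa [Matrix.range_cons_cons_empty]
  have hiff := hM.exists_dual_apply_eq_iff hv (a := ![a, b])
  simpa [Fin.forall_fin_two, sub_eq_zero, eq_comm] using hiff.symm

end SkewCombination

theorem exact_zero_prod_id_prodMap {R M N P Q : Type*} [Semiring R] [AddCommMonoid M]
    [AddCommMonoid N] [AddCommMonoid P] [AddCommMonoid Q] [Module R M] [Module R N] [Module R P]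
    [Module R Q] {h : M →ₗ[R] N} {k : N →ₗ[R] P} (hk : Function.Exact h k) :
    Function.Exact ((0 : M →ₗ[R] Q).prod h) (LinearMap.id.prodMap k : Q × N →ₗ[R] Q × P) := by
  rintro ⟨q, n⟩
  simp [hk n, eq_comm (a := q)]

/-- Let `R` be a commutative ring, `M` an invertible `R`-module, and
`f, g ∈ M` generators of `M`. Then the cokernel of the `R`-linear map
`Hom_R(M,R) → Hom_R(M,R) × R × R`, `φ ↦ (0, φ f, φ g)`, is isomorphic as an `R`-module
to `Hom_R(M,R) × M`. -/
theorem cokernel_zeroEvalMap (R : Type*) [CommRing R] (M : Type*) [AddCommGroup M]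
    [Module R M] (hM : IsInvertibleModule R M) (f g : M)
    (hfg : Submodule.span R ({f, g} : Set M) = ⊤) :
    Nonempty ((((M →ₗ[R] R) × R × R) ⧸ LinearMap.range (zeroEvalMap R M f g))
      ≃ₗ[R] (M →ₗ[R] R) × M) := by
  have hexact : Function.Exact (zeroEvalMap R M f g)
      (LinearMap.id.prodMap (skewCombination R f g)) :=
    exact_zero_prod_id_prodMap (hM.exact_prod_applyₗ_skewCombination hfg)
  have hsurj : Function.Surjective
      (LinearMap.id.prodMap (skewCombination R f g) : (M →ₗ[R] R) × R × R →ₗ[R] _) :=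
    Function.surjective_id.prodMap (skewCombination_surjective hfg)
  exact ⟨hexact.linearEquivOfSurjective hsurj⟩
end
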